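/- Let r be any regular expression in the alternative syntax over an alphabet Σ. If an expression of the form s* or s? occurs as a subexpression of the strong star normal form r•, then ε ∉ L(s). -/

import Mathlib

/-!
The operator `°` always removes the empty word, and `•` preserves whether the empty word belongs to
the language. A starred subexpression `((q•)°)*` created by `•` therefore has a body without `ε`,
and an optional subexpression `(q•)?` is only created when `ε ∉ L(q)`, that is, `ε ∉ L(q•)`. It remains
to see that `°`, applied to the body of a star, creates no new starred or optional subexpressions: every
such node of `r°` is already a node of `r`. The theorem follows by induction on `r`.
-/

/-- Regular expressions in the alternative syntax: letters, union, concatenation,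
Kleene star, and the option operator `?`; there are no constants `∅` or `ε`. -/
inductive AltRE (α : Type*) : Type _
  | char : α → AltRE α
  | plus : AltRE α → AltRE α → AltRE α
  | comp : AltRE α → AltRE α → AltRE α
  | star : AltRE α → AltRE α
  | opt : AltRE α → AltRE α

namespace AltRE

/-- The language denoted by an alternative-syntax regular expression. -/
def lang {α : Type*} : AltRE α → Language α
  | char a => {[a]}
  | plus r s => lang r + lang s
  | comp r s => lang r * lang s
  | star r => KStar.kstar (lang r)
  | opt r => lang r + 1

open Classical in
/-- The auxiliary operator `°`: `a° = a`, `(r+s)° = r°+s°`, `(r?)° = r°`, `(r*)° = r°`,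
and `(rs)° = rs` if `ε ∉ L(rs)`, `(rs)° = r°+s°` otherwise. -/
noncomputable def circ {α : Type*} : AltRE α → AltRE α
  | char a => char a
  | plus r s => plus (circ r) (circ s)
  | comp r s => if [] ∈ lang (comp r s) then plus (circ r) (circ s) else comp r s
  | star r => circ r
  | opt r => circ r

open Classical in
/-- The strong star normal form operator `•`: `a• = a`, `(r+s)• = r•+s•`,
`(rs)• = r•s•`, `(r*)• = ((r•)°)*`, and `(r?)• = r•` if `ε ∈ L(r)`,
`(r?)• = (r•)?` otherwise. -/
noncomputable def bullet {α : Type*} : AltRE α → AltRE α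
  | char a => char a
  | plus r s => plus (bullet r) (bullet s)
  | comp r s => comp (bullet r) (bullet s)
  | star r => star (circ (bullet r))
  | opt r => if [] ∈ lang r then bullet r else opt (bullet r)

end AltRE

/-- `Subexpr t r` means `t` occurs as a subexpression (a node of the syntax tree) of `r`. -/
inductive Subexpr {α : Type*} : AltRE α → AltRE α → Prop
  | refl (r : AltRE α) : Subexpr r r
  | plus_left {t r s : AltRE α} : Subexpr t r → Subexpr t (AltRE.plus r s)
  | plus_right {t r s : AltRE α} : Subexpr t s → Subexpr t (AltRE.plus r s)
  | comp_left {t r s : AltRE α} : Subexpr t r → Subexpr t (AltRE.comp r s)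
  | comp_right {t r s : AltRE α} : Subexpr t s → Subexpr t (AltRE.comp r s)
  | star {t r : AltRE α} : Subexpr t r → Subexpr t (AltRE.star r)
  | opt {t r : AltRE α} : Subexpr t r → Subexpr t (AltRE.opt r)

namespace AltRE

theorem nil_mem_plus {α : Type*} (r s : AltRE α) :
    [] ∈ lang (plus r s) ↔ [] ∈ lang r ∨ [] ∈ lang s := Iff.rfl

theorem nil_mem_comp {α : Type*} (r s : AltRE α) :
    [] ∈ lang (comp r s) ↔ [] ∈ lang r ∧ [] ∈ lang s := by
  simp [lang, Language.mem_mul]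

theorem nil_mem_star {α : Type*} (r : AltRE α) : [] ∈ lang (star r) :=
  Language.nil_mem_kstar _

theorem nil_mem_opt {α : Type*} (r : AltRE α) : [] ∈ lang (opt r) :=
  Or.inr rfl

theorem nil_notMem_char {α : Type*} (a : α) : [] ∉ lang (char a) := by
  intro h
  exact List.cons_ne_nil a [] (Set.mem_singleton_iff.mp h).symm

theorem nil_notMem_circ {α : Type*} (r : AltRE α) : [] ∉ lang (circ r) := by
  induction r with
  | char a => exact nil_notMem_char a
  | plus r s ihr ihs =>
    rw [circ, nil_mem_plus]
    exact not_or.mpr ⟨ihr, ihs⟩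
  | comp r s ihr ihs =>
    rw [circ]
    split_ifs with h
    · rw [nil_mem_plus]
      exact not_or.mpr ⟨ihr, ihs⟩
    · exact h
  | star r ih => exact ih
  | opt r ih => exact ih

theorem nil_mem_bullet {α : Type*} (r : AltRE α) : [] ∈ lang (bullet r) ↔ [] ∈ lang r := by
  induction r with
  | char a => rfl
  | plus r s ihr ihs => rw [bullet, nil_mem_plus, nil_mem_plus, ihr, ihs]
  | comp r s ihr ihs => rw [bullet, nil_mem_comp, nil_mem_comp, ihr, ihs]
  | star r ih => exact iff_of_true (nil_mem_star _) (nil_mem_star _)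
  | opt r ih =>
    rw [bullet]
    split_ifs with h
    · exact iff_of_true (ih.mpr h) (nil_mem_opt _)
    · exact iff_of_true (nil_mem_opt _) (nil_mem_opt _)

/-- Every starred or optional node of the syntax tree has a body whose language omits `ε`. -/
def BodiesOmitNil {α : Type*} : AltRE α → Prop
  | char _ => True
  | plus r s => BodiesOmitNil r ∧ BodiesOmitNil s
  | comp r s => BodiesOmitNil r ∧ BodiesOmitNil s
  | star r => [] ∉ lang r ∧ BodiesOmitNil r
  | opt r => [] ∉ lang r ∧ BodiesOmitNil r

theorem BodiesOmitNil.of_subexpr {α : Type*} {t r : AltRE α} (h : Subexpr t r)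
    (hr : BodiesOmitNil r) : BodiesOmitNil t := by
  induction h with
  | refl => exact hr
  | plus_left _ ih => exact ih hr.1
  | plus_right _ ih => exact ih hr.2
  | comp_left _ ih => exact ih hr.1
  | comp_right _ ih => exact ih hr.2
  | star _ ih => exact ih hr.2
  | opt _ ih => exact ih hr.2

/-- Every starred or optional node of `r°` is already a node of `r`, with the same body. -/
theorem BodiesOmitNil.circ {α : Type*} {r : AltRE α} (hr : BodiesOmitNil r) :
    BodiesOmitNil (circ r) := by
  induction r with
  | char a => exact hr
  | plus r s ihr ihs => exact ⟨ihr hr.1, ihs hr.2⟩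
  | comp r s ihr ihs =>
    rw [AltRE.circ]
    split_ifs
    · exact ⟨ihr hr.1, ihs hr.2⟩
    · exact hr
  | star r ih => exact ih hr.2
  | opt r ih => exact ih hr.2

theorem bodiesOmitNil_bullet {α : Type*} (r : AltRE α) : BodiesOmitNil (bullet r) := by
  induction r with
  | char a => trivial
  | plus r s ihr ihs => exact ⟨ihr, ihs⟩
  | comp r s ihr ihs => exact ⟨ihr, ihs⟩
  | star r ih => exact ⟨nil_notMem_circ _, ih.circ⟩
  | opt r ih =>
    rw [bullet]
    split_ifs with h
    · exact ih
    · exact ⟨mt (nil_mem_bullet r).mp h, ih⟩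

end AltRE

/-- In a strong star normal form `r•`, every starred or optional subexpression `s*` or
`s?` has `ε ∉ L(s)`. -/
theorem ssnf_starred_subexpr {α : Type*} (r s : AltRE α)
    (h : Subexpr (AltRE.star s) (AltRE.bullet r) ∨ Subexpr (AltRE.opt s) (AltRE.bullet r)) :
    [] ∉ AltRE.lang s := by
  rcases h with h | h
  · exact (AltRE.BodiesOmitNil.of_subexpr h (AltRE.bodiesOmitNil_bullet r)).1
  · exact (AltRE.BodiesOmitNil.of_subexpr h (AltRE.bodiesOmitNil_bullet r)).1
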